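/- Let p ≥ q ≥ 1 be coprime integers with p + q divisible by 3. Then p² + q² - 7pq + 9 ≥ 0 holds if and only if either (p, q) = (Fib(2k+5), Fib(2k+1)) for some natural number k, or (p, q) = (2, 1), or p > ((7 + 3√5)/2)·q. -/

import Mathlib

/-!
The map `(p, q) ↦ (q, 7q - p)` preserves the form `p² + q² - 7pq`, and on `1 < q ≤ p` it strictly
decreases the solutions of `p² + q² - 7pq = -9` without leaving the region `0 < q ≤ p`. The descent
ends at `q = 1`, that is, at `(5, 1)` or `(2, 1)`, so climbing back up produces the pairs
`(Fib (n + 4), Fib n)` with `n ≥ -1` odd. Over the reals the form factors as `(p - φ⁴q)(p - ψ⁴q)`,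
where `φ⁴ = (7 + 3√5)/2` is irrational; hence it has no nontrivial integer zeros, and for
`0 < q ≤ p` it is positive exactly when `p > φ⁴q`. Finally, `3 ∣ p + q` makes it a multiple of `9`,
so that values `≥ -9` are either `-9` or positive.
-/

open Real
open scoped goldenRatio

theorem intFib_add_four (n : ℤ) : Int.fib (n + 4) = 2 * Int.fib n + 3 * Int.fib (n + 1) := by
  grind [Int.fib_add_two]

theorem intFib_add_eight (n : ℤ) : Int.fib (n + 8) = 7 * Int.fib (n + 4) - Int.fib n := by
  grind [Int.fib_add_two]

theorem intFib_add_four_sq_add_sq_sub_seven_mul (n : ℤ) :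
    Int.fib (n + 4) ^ 2 + Int.fib n ^ 2 - 7 * Int.fib (n + 4) * Int.fib n =
      9 * (-1) ^ n.natAbs := by
  have fib_pred : Int.fib (n - 1) = Int.fib (n + 1) - Int.fib n := by
    grind [Int.fib_add_two (n - 1)]
  have cassini := Int.fib_succ_mul_fib_pred_sub_fib_sq n
  rw [fib_pred] at cassini
  rw [intFib_add_four]
  linear_combination 9 * cassini

theorem exists_intFib_pair_iff {p q : ℤ} :
    (∃ k : ℤ, -1 ≤ k ∧ p = Int.fib (2 * k + 5) ∧ q = Int.fib (2 * k + 1)) ↔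
      (∃ k : ℕ, p = (Nat.fib (2 * k + 5) : ℤ) ∧ q = (Nat.fib (2 * k + 1) : ℤ)) ∨
        (p = 2 ∧ q = 1) := by
  constructor
  · rintro ⟨k, hk, hp, hq⟩
    obtain rfl | hk_nonneg : k = -1 ∨ 0 ≤ k := by omega
    · exact Or.inr ⟨hp, hq⟩
    · lift k to ℕ using hk_nonneg
      exact Or.inl ⟨k, hp, hq⟩
  · rintro (⟨k, hp, hq⟩ | ⟨hp, hq⟩)
    · exact ⟨k, by omega, hp, hq⟩
    · exact ⟨-1, le_rfl, hp, hq⟩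

theorem vieta_bounds_of_eq_neg_nine {p q : ℤ} (hq : 1 < q) (hpq : q ≤ p)
    (h : p ^ 2 + q ^ 2 - 7 * p * q = -9) : 0 < 7 * q - p ∧ 7 * q - p < q := by
  have root_mul : p * (7 * q - p) = q ^ 2 + 9 := by linear_combination -h
  constructor
  · refine pos_of_mul_pos_right (b := 7 * q - p) (a := p) ?_ (by omega)
    rw [root_mul]
    positivity
  · by_contra! hle
    have prod_nonneg : 0 ≤ (p - q) * (7 * q - p - q) := mul_nonneg (by omega) (by omega)
    have five_mul_sq_le : 5 * q ^ 2 ≤ 9 := by linear_combination prod_nonneg + root_mul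
    nlinarith [five_mul_sq_le]

theorem exists_intFib_of_eq_neg_nine {p q : ℤ} (hq : 0 < q) (hpq : q ≤ p)
    (h : p ^ 2 + q ^ 2 - 7 * p * q = -9) :
    ∃ k : ℤ, -1 ≤ k ∧ p = Int.fib (2 * k + 5) ∧ q = Int.fib (2 * k + 1) := by
  obtain rfl | hq_one : q = 1 ∨ 1 < q := by omega
  · have roots : (p - 2) * (p - 5) = 0 := by linear_combination h
    obtain hp | hp := mul_eq_zero.mp roots
    · exact ⟨-1, le_rfl, sub_eq_zero.mp hp, rfl⟩
    · exact ⟨0, by omega, sub_eq_zero.mp hp, rfl⟩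
  · obtain ⟨hpos, hlt⟩ := vieta_bounds_of_eq_neg_nine hq_one hpq h
    obtain ⟨k, hk, hqk, hrk⟩ := exists_intFib_of_eq_neg_nine hpos hlt.le (by linear_combination h)
    have climb : Int.fib (2 * (k + 2) + 5) = 7 * Int.fib (2 * k + 5) - Int.fib (2 * k + 1) := by
      convert intFib_add_eight (2 * k + 1) using 2 <;> ring_nf
    refine ⟨k + 2, by omega, ?_, by rw [hqk]; congr 1; ring⟩
    rw [climb, ← hrk, ← hqk]
    ring
termination_by q.toNat

theorem sq_add_sq_sub_seven_mul_eq_neg_nine_iff {p q : ℤ} (hq : 0 < q) (hpq : q ≤ p) :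
    p ^ 2 + q ^ 2 - 7 * p * q = -9 ↔
      ∃ k : ℤ, -1 ≤ k ∧ p = Int.fib (2 * k + 5) ∧ q = Int.fib (2 * k + 1) := by
  refine ⟨exists_intFib_of_eq_neg_nine hq hpq, ?_⟩
  rintro ⟨k, -, rfl, rfl⟩
  have hodd : Odd (2 * k + 1).natAbs := Int.natAbs_odd.mpr (odd_two_mul_add_one k)
  simpa [add_assoc, hodd.neg_one_pow] using intFib_add_four_sq_add_sq_sub_seven_mul (2 * k + 1)

theorem goldenRatio_pow_four : φ ^ 4 = 3 * φ + 2 := by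
  linear_combination (φ ^ 2 + φ + 2) * goldenRatio_sq

theorem goldenConj_pow_four : ψ ^ 4 = 3 * ψ + 2 := by
  linear_combination (ψ ^ 2 + ψ + 2) * goldenConj_sq

theorem goldenRatio_pow_four_eq_sqrt : φ ^ 4 = (7 + 3 * √5) / 2 := by
  rw [goldenRatio_pow_four, goldenRatio]
  ring

theorem irrational_goldenRatio_pow_four : Irrational (φ ^ 4) := by
  rw [goldenRatio_pow_four]
  exact_mod_cast (goldenRatio_irrational.natCast_mul three_ne_zero).add_natCast 2

theorem irrational_goldenConj_pow_four : Irrational (ψ ^ 4) := by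
  rw [goldenConj_pow_four]
  exact_mod_cast (goldenConj_irrational.natCast_mul three_ne_zero).add_natCast 2

theorem goldenConj_pow_four_lt_one : ψ ^ 4 < 1 := by
  rw [← Even.pow_abs (by decide)]
  exact pow_lt_one₀ (abs_nonneg ψ)
    (abs_lt.mpr ⟨neg_one_lt_goldenConj, goldenConj_neg.trans one_pos⟩) four_ne_zero

theorem sq_add_sq_sub_seven_mul_eq_mul (x y : ℝ) :
    x ^ 2 + y ^ 2 - 7 * x * y = (x - φ ^ 4 * y) * (x - ψ ^ 4 * y) := by
  have sum_eq : φ ^ 4 + ψ ^ 4 = 7 := by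
    rw [goldenRatio_pow_four, goldenConj_pow_four]
    linear_combination 3 * goldenRatio_add_goldenConj
  have prod_eq : φ ^ 4 * ψ ^ 4 = 1 := by
    rw [← mul_pow, goldenRatio_mul_goldenConj]
    norm_num
  linear_combination x * y * sum_eq - y ^ 2 * prod_eq

theorem sq_add_sq_sub_seven_mul_pos_iff {x y : ℝ} (hy : 0 < y) (hyx : y ≤ x) :
    0 < x ^ 2 + y ^ 2 - 7 * x * y ↔ φ ^ 4 * y < x := by
  have hconj : ψ ^ 4 * y < x := (mul_lt_of_lt_one_left hy goldenConj_pow_four_lt_one).trans_le hyx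
  rw [sq_add_sq_sub_seven_mul_eq_mul, mul_pos_iff_of_pos_right (sub_pos.mpr hconj), sub_pos]

theorem sq_add_sq_sub_seven_mul_ne_zero (p : ℤ) {q : ℤ} (hq : q ≠ 0) :
    p ^ 2 + q ^ 2 - 7 * p * q ≠ 0 := by
  intro h
  have hreal : (p : ℝ) ^ 2 + q ^ 2 - 7 * p * q = 0 := by exact_mod_cast h
  rw [sq_add_sq_sub_seven_mul_eq_mul, mul_eq_zero, sub_eq_zero, sub_eq_zero] at hreal
  obtain hp | hp := hreal
  · exact (irrational_goldenRatio_pow_four.mul_intCast hq).ne_int p hp.symm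
  · exact (irrational_goldenConj_pow_four.mul_intCast hq).ne_int p hp.symm

theorem nine_dvd_sq_add_sq_sub_seven_mul {p q : ℤ} (h : 3 ∣ p + q) :
    9 ∣ p ^ 2 + q ^ 2 - 7 * p * q := by
  obtain ⟨m, hm⟩ := h
  exact ⟨m ^ 2 - p * q, by linear_combination (p + q + 3 * m) * hm⟩

theorem sq_add_sq_sub_seven_mul_add_nine_nonneg_iff {p q : ℤ} (hq : q ≠ 0)
    (h : 3 ∣ p + q) :
    0 ≤ p ^ 2 + q ^ 2 - 7 * p * q + 9 ↔
      p ^ 2 + q ^ 2 - 7 * p * q = -9 ∨ 0 < p ^ 2 + q ^ 2 - 7 * p * q := by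
  have hne := sq_add_sq_sub_seven_mul_ne_zero p hq
  have hdvd := nine_dvd_sq_add_sq_sub_seven_mul h
  omega

theorem diophantine_solutions_general (p q : ℤ) (hq : 1 ≤ q) (hpq : q ≤ p)
    (hdvd : (3 : ℤ) ∣ p + q) :
    p ^ 2 + q ^ 2 - 7 * p * q + 9 ≥ 0 ↔
      (∃ k : ℕ, p = (Nat.fib (2 * k + 5) : ℤ) ∧ q = (Nat.fib (2 * k + 1) : ℤ)) ∨
      (p = 2 ∧ q = 1) ∨
      ((p : ℝ) > (7 + 3 * Real.sqrt 5) / 2 * (q : ℝ)) := by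
  have hq_pos : 0 < q := hq
  have pos_iff : 0 < p ^ 2 + q ^ 2 - 7 * p * q ↔ (p : ℝ) > (7 + 3 * √5) / 2 * q := by
    rw [gt_iff_lt, ← goldenRatio_pow_four_eq_sqrt,
      ← sq_add_sq_sub_seven_mul_pos_iff (by exact_mod_cast hq_pos) (by exact_mod_cast hpq)]
    exact_mod_cast Iff.rfl
  rw [ge_iff_le, sq_add_sq_sub_seven_mul_add_nine_nonneg_iff hq_pos.ne' hdvd, pos_iff,
    sq_add_sq_sub_seven_mul_eq_neg_nine_iff hq_pos hpq, exists_intFib_pair_iff, or_assoc]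

/-- Let `p ≥ q ≥ 1` be coprime integers with `p + q` divisible by `3`. Then
`p² + q² - 7pq + 9 ≥ 0` holds if and only if either
`(p, q) = (Fib (2k+5), Fib (2k+1))` for some natural number `k`, or
`(p, q) = (2, 1)`, or `p > ((7 + 3√5)/2) * q`. -/
theorem diophantine_solutions (p q : ℤ) (hq : 1 ≤ q) (hpq : q ≤ p)
    (hcop : IsCoprime p q) (hdvd : (3 : ℤ) ∣ p + q) :
    p ^ 2 + q ^ 2 - 7 * p * q + 9 ≥ 0 ↔
      (∃ k : ℕ, p = (Nat.fib (2 * k + 5) : ℤ) ∧ q = (Nat.fib (2 * k + 1) : ℤ)) ∨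
      (p = 2 ∧ q = 1) ∨
      ((p : ℝ) > (7 + 3 * Real.sqrt 5) / 2 * (q : ℝ)) :=
  diophantine_solutions_general p q hq hpq hdvd
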